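/- For every 0 < h₀ < 1 there exists C > 0 such that ‖|D| F(hA) (hA+i)^{-1} u‖_{L²} ≤ C ‖|D| (hA+i)^{-1} u‖_{L²} for all u ∈ 𝒮(ℝ^d) and all 0 < h ≤ h₀, where F(λ) = arctan(λ). -/

import Mathlib

open MeasureTheory Filter Topology Complex
open scoped Real ENNReal FourierTransform ComplexConjugate

noncomputable section

/-- Euclidean space `ℝ^d`. -/
abbrev Ed (d : ℕ) : Type := EuclideanSpace ℝ (Fin d)

/-- `L²(ℝ^d)` with complex values. -/
abbrev L2 (d : ℕ) := MeasureTheory.Lp ℂ 2 (volume : Measure (Ed d))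

/-- The partial derivative `∂_j u`. -/
def pd (d : ℕ) (j : Fin d) (u : Ed d → ℂ) : Ed d → ℂ :=
  fun x => fderiv ℝ u x (EuclideanSpace.single j (1:ℝ))

/-- The operator `∑_{j,k} D_j (b_{jk} D_k) = - ∑_{j,k} ∂_j (b_{jk} ∂_k)` (complex
coefficients), applied to a function `u`. -/
def divGradC (d : ℕ) (b : Ed d → Fin d → Fin d → ℂ) (u : Ed d → ℂ) : Ed d → ℂ :=
  fun x => -∑ j : Fin d, ∑ k : Fin d,
    fderiv ℝ (fun y => b y j k * fderiv ℝ u y (EuclideanSpace.single k (1:ℝ))) x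
      (EuclideanSpace.single j (1:ℝ))

/-- `- div (G ∇ u) = ∑_{j,k} D_j (G_{jk} D_k) u` for a real coefficient matrix `G`. -/
def divGrad (d : ℕ) (G : Ed d → Fin d → Fin d → ℝ) (u : Ed d → ℂ) : Ed d → ℂ :=
  divGradC d (fun x j k => (G x j k : ℂ)) u

/-- The operation `a ↦ x·∇a` on real valued functions. -/
def xdotOp (d : ℕ) : (Ed d → ℝ) → Ed d → ℝ := fun a x => fderiv ℝ a x x

/-- The operation `a ↦ x·∇a` on complex valued functions. -/
def xdotC (d : ℕ) : (Ed d → ℂ) → Ed d → ℂ := fun a x => fderiv ℝ a x x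

/-- `a ∈ C_b^∞(ℝ^d)`: smooth with all derivatives bounded. -/
def CbSmooth (d : ℕ) (a : Ed d → ℝ) : Prop :=
  ContDiff ℝ (⊤ : ℕ∞) a ∧ ∀ n : ℕ, ∃ C : ℝ, ∀ x, ‖iteratedFDeriv ℝ n a x‖ ≤ C

/-- `a ∈ S_dil(ℝ^d)` : `a ∈ C_b^∞` and `(x·∇)^n a ∈ L^∞` for all `n`. -/
def MemSdil (d : ℕ) (a : Ed d → ℝ) : Prop :=
  CbSmooth d a ∧ ∀ n : ℕ, ∃ C : ℝ, ∀ x, |(xdotOp d)^[n] a x| ≤ C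

/-- Complex-valued version of `S_dil(ℝ^d)`. -/
def MemSdilC (d : ℕ) (a : Ed d → ℂ) : Prop :=
  (ContDiff ℝ (⊤ : ℕ∞) a ∧ ∀ n : ℕ, ∃ C : ℝ, ∀ x, ‖iteratedFDeriv ℝ n a x‖ ≤ C) ∧
  ∀ n : ℕ, ∃ C : ℝ, ∀ x, ‖(xdotC d)^[n] a x‖ ≤ C

/-- The coefficient matrix is symmetric with real entries. -/
def SymmetricCoef (d : ℕ) (G : Ed d → Fin d → Fin d → ℝ) : Prop := ∀ x j k, G x j k = G x k j

/-- Uniform ellipticity: `Λ₊ ≥ G(x) ≥ Λ₋ > 0` as quadratic forms. -/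
def UniformlyElliptic (d : ℕ) (G : Ed d → Fin d → Fin d → ℝ) : Prop :=
  ∃ lam Lam : ℝ, 0 < lam ∧ ∀ (x : Ed d) (v : Fin d → ℝ),
    lam * ∑ j, v j ^ 2 ≤ (∑ j, ∑ k, G x j k * v j * v k) ∧
      (∑ j, ∑ k, G x j k * v j * v k) ≤ Lam * ∑ j, v j ^ 2

/-- The standing assumptions of the paper: `G` symmetric with entries in `C_b^∞`,
uniformly elliptic. -/
def Standing (d : ℕ) (G : Ed d → Fin d → Fin d → ℝ) : Prop :=
  (∀ j k, CbSmooth d fun x => G x j k) ∧ SymmetricCoef d G ∧ UniformlyElliptic d G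

/-- `G = I_d + H`. -/
def Gmat (d : ℕ) (H : Ed d → Fin d → Fin d → ℝ) : Ed d → Fin d → Fin d → ℝ :=
  fun x j k => (if j = k then 1 else 0) + H x j k

/-- Long range condition `|∂^α (G - I_d)| ≤ C_α ⟨x⟩^{-μ-|α|}`. -/
def LongRange (d : ℕ) (G : Ed d → Fin d → Fin d → ℝ) (μ : ℝ) : Prop :=
  ∀ (j k : Fin d) (n : ℕ), ∃ C : ℝ, ∀ x : Ed d,
    ‖iteratedFDeriv ℝ n (fun y => G y j k - if j = k then (1:ℝ) else 0) x‖
      ≤ C * ((1 + ‖x‖ ^ 2) ^ (-(μ + n) / 2) : ℝ)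

/-- `R` is the resolvent `(P - z)⁻¹` of the self-adjoint realization of
`P = - div (G ∇·)`: for every `f ∈ L²`, `g = R f` solves `(P - z) g = f` in the sense
of distributions (this characterizes the resolvent uniquely). -/
def IsWeakResolvent (d : ℕ) (G : Ed d → Fin d → Fin d → ℝ) (z : ℂ)
    (R : L2 d →L[ℂ] L2 d) : Prop :=
  ∀ (f : L2 d) (φ : SchwartzMap (Ed d) ℂ),
    (∫ x, (R f) x * divGrad d G (⇑φ) x) - z * (∫ x, (R f) x * φ x) = ∫ x, f x * φ x

/-- The japanese bracket weight `⟨x⟩^s = (1+|x|²)^{s/2}`. -/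
def jweight (d : ℕ) (s : ℝ) : Ed d → ℝ := fun x => (1 + ‖x‖ ^ 2) ^ (s / 2)

/-- The dilation group `(e^{itA} u)(x) = e^{td/2} u(e^t x)`, where
`A = (x·∇ + ∇·x)/(2i)` is the generator of dilations. -/
def dil (d : ℕ) (t : ℝ) (u : Ed d → ℂ) : Ed d → ℂ :=
  fun x => (Real.exp (t * d / 2) : ℂ) * u (Real.exp t • x)

/-- The `L²` inner product of two functions (conjugate linear in the first variable,
as is Mathlib's convention). -/
def pairL2 (d : ℕ) (u v : Ed d → ℂ) : ℂ := ∫ x : Ed d, (starRingEnd ℂ) (u x) * v x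

/-- The resolvent `(hA - z)⁻¹ = (1/i) ∫₀^{±∞} e^{-itz} e^{ithA} dt` (`± Im z < 0`) of the
(rescaled) generator of dilations, realized by its defining integral formula. -/
def resDil (d : ℕ) (h : ℝ) (z : ℂ) (u : Ed d → ℂ) : Ed d → ℂ := fun x =>
  if z.im < 0 then
    Complex.I⁻¹ * ∫ t in Set.Ici (0:ℝ), Complex.exp (-(Complex.I * t * z)) * dil d (t * h) u x
  else
    -Complex.I⁻¹ * ∫ t in Set.Iic (0:ℝ), Complex.exp (-(Complex.I * t * z)) * dil d (t * h) u x

/-- `sin(τ A) u = (e^{iτA} - e^{-iτA}) u / (2i)`. -/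
def sinA (d : ℕ) (τ : ℝ) (u : Ed d → ℂ) : Ed d → ℂ :=
  fun x => (dil d τ u x - dil d (-τ) u x) / (2 * Complex.I)

/-- `F(hA) = arctan(hA)` realized through `arctan λ = ∫₀^∞ sin(tλ) e^{-t} dt / t`. -/
def arctanA (d : ℕ) (h : ℝ) (u : Ed d → ℂ) : Ed d → ℂ :=
  fun x => ∫ t in Set.Ioi (0:ℝ), ((Real.exp (-t) / t : ℝ) : ℂ) * sinA d (t * h) u x

/-- Coefficients of the commutator `i[P,A] = ∑ D_j (2G_{jk} - x·∇G_{jk}) D_k`. -/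
def commCoef (d : ℕ) (G : Ed d → Fin d → Fin d → ℝ) : Ed d → Fin d → Fin d → ℝ :=
  fun x j k => 2 * G x j k - xdotOp d (fun y => G y j k) x

/-- `P_τ = e^{-iτA} (i[P,A]) e^{iτA}` applied to a function. -/
def ptauFun (d : ℕ) (G : Ed d → Fin d → Fin d → ℝ) (τ : ℝ) (u : Ed d → ℂ) : Ed d → ℂ :=
  dil d (-τ) (divGrad d (commCoef d G) (dil d τ u))

/-- Coefficients of `P_τ = e^{-iτA} (i[P,A]) e^{iτA}` for `P = -div((I+H)∇)`;
indeed `e^{-iτA} (∑ D_j b D_k) e^{iτA} = e^{2τ} ∑ D_j b(e^{-τ}x) D_k`. -/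
def ptauCoef (d : ℕ) (H : Ed d → Fin d → Fin d → ℝ) (τ : ℝ) : Ed d → Fin d → Fin d → ℝ :=
  fun x j k => Real.exp (2 * τ) * commCoef d (Gmat d H) (Real.exp (-τ) • x) j k

/-- Coefficients of `Q_s = ∫₀¹ (d P_τ / dτ)|_{τ=σs} dσ`. -/
def qCoef (d : ℕ) (H : Ed d → Fin d → Fin d → ℝ) (s : ℝ) : Ed d → Fin d → Fin d → ℝ :=
  fun x j k => ∫ σ in (0:ℝ)..(1:ℝ), deriv (fun τ => ptauCoef d H τ x j k) (σ * s)

/-- Coefficients of `B_τ = τ ∫₀¹ s Q_{sτ} ds`. -/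
def bCoef (d : ℕ) (H : Ed d → Fin d → Fin d → ℝ) (τ : ℝ) : Ed d → Fin d → Fin d → ℝ :=
  fun x j k => τ * ∫ s in (0:ℝ)..(1:ℝ), s * qCoef d H (s * τ) x j k

/-- The Fourier multiplier `|D|` (with symbol `|ξ|`). -/
def absD (d : ℕ) (u : Ed d → ℂ) : Ed d → ℂ :=
  fun x => 𝓕⁻ (fun ξ : Ed d => (‖ξ‖ : ℂ) * 𝓕 u ξ) x

/-- `‖ |D| w ‖_{L²}`, computed on the Fourier side (Plancherel). -/
def Dnorm (d : ℕ) (w : Ed d → ℂ) : ℝ :=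
  (eLpNorm (fun ξ : Ed d => (‖ξ‖ : ℂ) * 𝓕 w ξ) 2 volume).toReal

/-- A general Fourier multiplier `ρ(D)`. -/
def multD (d : ℕ) (ρ : Ed d → ℂ) (u : Ed d → ℂ) : Ed d → ℂ :=
  fun x => 𝓕⁻ (fun ξ : Ed d => ρ ξ * 𝓕 u ξ) x

/-- The operator `A = (x·∇ + ∇·x)/(2i) = (x·∇ + d/2)/i` applied to a function. -/
def opA (d : ℕ) (u : Ed d → ℂ) : Ed d → ℂ :=
  fun x => (fderiv ℝ u x x + (d / 2 : ℂ) * u x) / Complex.I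

/-- The functions `F_ν(λ) = ∫₀^∞ sin(tλ) t/(t²+ν²) e^{-t} dt` approximating `arctan`. -/
def Fnu (ν lam : ℝ) : ℝ :=
  ∫ t in Set.Ioi (0:ℝ), Real.sin (t * lam) * (t / (t ^ 2 + ν ^ 2)) * Real.exp (-t)

/-- `m`-admissible family in `S_dil(ℝ^d)`:
`‖∂_τ^k (x·∇)^n b_τ‖_{L^∞} ≤ C_{kn} e^{m|τ|}` for all `k, n`. -/
def AdmissibleCoeff (d : ℕ) (m : ℕ) (b : ℝ → Ed d → ℂ) : Prop :=
  (∀ τ, MemSdilC d (b τ)) ∧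
  (∀ (n : ℕ) (x : Ed d), ContDiff ℝ (⊤ : ℕ∞) fun τ => (xdotC d)^[n] (b τ) x) ∧
  ∀ k n : ℕ, ∃ C : ℝ, ∀ (τ : ℝ) (x : Ed d),
    ‖iteratedDeriv k (fun σ => (xdotC d)^[n] (b σ) x) τ‖ ≤ C * Real.exp (m * |τ|)

/-- `m`-admissible family of differential operators `B_τ = ∑ D_j b_{jk,τ} D_k`. -/
def AdmissibleOp (d : ℕ) (m : ℕ) (B : ℝ → Ed d → Fin d → Fin d → ℂ) : Prop :=
  ∀ j k, AdmissibleCoeff d m fun τ x => B τ x j k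

/-- Functions that are continuous and bounded on `[0,∞)` (the spectrum of `P`). -/
def GoodSymbol (φ : ℝ → ℂ) : Prop :=
  Continuous φ ∧ ∃ C : ℝ, ∀ lam : ℝ, 0 ≤ lam → ‖φ lam‖ ≤ C

/-- The (continuous bounded) functional calculus `φ ↦ φ(P)` of the nonnegative
self-adjoint operator `P = -div(G∇)`, characterized by: it is linear and
multiplicative on continuous functions bounded on `[0,∞) ⊇ spec(P)`, compatible with
sup-norm bounds and adjoints, only depends on the restriction of the symbol to
`[0,∞)`, and sends `λ ↦ (λ - z)⁻¹` to the resolvent `(P - z)⁻¹`.  These properties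
determine `φ(P)` uniquely for every `φ` continuous and vanishing at infinity.
Moreover `0` is not an eigenvalue of `P` (field `ker_triv`). -/
structure SpectralCalc (d : ℕ) (G : Ed d → Fin d → Fin d → ℝ) where
  map : (ℝ → ℂ) → (L2 d →L[ℂ] L2 d)
  map_congr : ∀ φ ψ, GoodSymbol φ → GoodSymbol ψ →
    (∀ lam : ℝ, 0 ≤ lam → φ lam = ψ lam) → map φ = map ψ
  map_add : ∀ φ ψ, GoodSymbol φ → GoodSymbol ψ →
    map (fun lam => φ lam + ψ lam) = map φ + map ψ
  map_smul : ∀ (c : ℂ) φ, GoodSymbol φ → map (fun lam => c * φ lam) = c • map φ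
  map_mul : ∀ φ ψ, GoodSymbol φ → GoodSymbol ψ →
    map (fun lam => φ lam * ψ lam) = (map φ).comp (map ψ)
  map_norm : ∀ (φ) (C : ℝ), (∀ lam : ℝ, 0 ≤ lam → ‖φ lam‖ ≤ C) → ‖map φ‖ ≤ C
  map_star : ∀ φ, GoodSymbol φ →
    ContinuousLinearMap.adjoint (map φ) = map (fun lam => (starRingEnd ℂ) (φ lam))
  map_resolvent : ∀ z : ℂ, z.im ≠ 0 →
    IsWeakResolvent d G z (map fun lam => ((lam : ℂ) - z)⁻¹)
  ker_triv : ∀ f : L2 d,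
    (∀ φ : SchwartzMap (Ed d) ℂ, (∫ x, f x * divGrad d G (⇑φ) x) = 0) → f = 0

/-- `Rj = ∂_j P^{-1/2}` is the `j`-th Riesz transform of `P`, defined as the strong
limit `s-lim_n π^{-1/2} ∂_j ∫_{1/n}^n e^{-tP} dt/√t`; here `gn n` is the vector
integral `∫_{1/n}^n e^{-tP} f dt/√t` and `wn n` is its distributional `∂_j`
derivative. -/
def RieszOf (d : ℕ) (G : Ed d → Fin d → Fin d → ℝ) (S : SpectralCalc d G) (j : Fin d)
    (Rj : L2 d →L[ℂ] L2 d) : Prop :=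
  ∀ (f : L2 d) (gn wn : ℕ → L2 d),
    (∀ n : ℕ, gn n = ∫ t in Set.Icc ((n : ℝ)⁻¹) (n : ℝ),
        ((Real.sqrt t)⁻¹ : ℝ) • (S.map (fun lam => Complex.exp (-(t : ℂ) * ((max lam 0 : ℝ) : ℂ))) f)) →
    (∀ (n : ℕ) (φ : SchwartzMap (Ed d) ℂ),
        (∫ x, (wn n) x * φ x) = -∫ x, (gn n) x * pd d j (⇑φ) x) →
    Tendsto (fun n : ℕ => ((Real.sqrt Real.pi)⁻¹ : ℝ) • wn n) atTop (𝓝 (Rj f))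

section Plancherel
variable {V : Type*} [NormedAddCommGroup V] [InnerProductSpace ℝ V] [MeasurableSpace V]
  [BorelSpace V] [FiniteDimensional ℝ V]

lemma fourier_flip {f g : V → ℂ} (hf : Integrable f) (hg : Integrable g) :
    ∫ ξ, 𝓕 f ξ * g ξ = ∫ x, f x * 𝓕 g x := by
  have := VectorFourier.integral_fourierIntegral_smul_eq_flip (μ := volume) (ν := volume)
    (e := Real.fourierChar) (L := innerₗ V) Real.continuous_fourierChar continuous_inner hf hg
  simp only [flip_innerₗ, smul_eq_mul] at this
  exact this

lemma fourier_continuous {f : V → ℂ} (hf : Integrable f) : Continuous (𝓕 f) :=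
  VectorFourier.fourierIntegral_continuous Real.continuous_fourierChar
    continuous_inner hf

/-- Two locally integrable functions with equal pairings against Schwartz functions agree a.e. -/
lemma ae_eq_of_schwartz {f g : V → ℂ} (hf : LocallyIntegrable f) (hg : LocallyIntegrable g)
    (H : ∀ φ : SchwartzMap V ℂ, ∫ x, f x * φ x = ∫ x, g x * φ x) : f =ᵐ[volume] g := by
  refine ae_eq_of_integral_contDiff_smul_eq hf hg ?_
  intro φ h1 h2
  have h3 : HasCompactSupport (fun x => (φ x : ℂ)) := h2.comp_left (g := fun r : ℝ => (r:ℂ)) (by simp)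
  have h4 : ContDiff ℝ (⊤ : ℕ∞) (fun x => (φ x : ℂ)) := Complex.ofRealCLM.contDiff.comp h1
  have := H (h3.toSchwartzMap h4)
  have e : ∀ x, (h3.toSchwartzMap h4) x = (φ x : ℂ) := fun x => rfl
  simp only [e] at this
  simpa only [Complex.real_smul, mul_comm] using this

lemma plancherel_l1_l2 {f : V → ℂ} (hf : Integrable f) (hf2 : MemLp f 2 (volume : Measure V)) :
    eLpNorm (𝓕 f) 2 volume = eLpNorm f 2 volume := by
  set F : Lp ℂ 2 (volume : Measure V) := hf2.toLp f with hF
  have h1 : 𝓕 f =ᵐ[volume] (𝓕 F : Lp ℂ 2 (volume : Measure V)) := by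
    refine ae_eq_of_schwartz (fourier_continuous hf).locallyIntegrable
      ((Lp.memLp _).locallyIntegrable (by norm_num)) ?_
    intro φ
    have h2 := congrArg (fun T => T φ) (Lp.fourier_toTemperedDistribution_eq F)
    simp only [TemperedDistribution.fourier_apply, Lp.toTemperedDistribution_apply] at h2
    rw [fourier_flip hf (φ.integrable (μ := volume))]
    have h3 : ∫ x, f x * 𝓕 (⇑φ) x = ∫ x, (𝓕 φ) x • F x := by
      refine integral_congr_ae ?_
      filter_upwards [hf2.coeFn_toLp] with x hx
      rw [hF, hx, SchwartzMap.fourier_coe, smul_eq_mul, mul_comm]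
    rw [h3, h2]
    simp only [smul_eq_mul, mul_comm]
  have h4 : ‖(𝓕 F : Lp ℂ 2 (volume : Measure V))‖ₑ = ‖F‖ₑ := by
    rw [← ofReal_norm, Lp.norm_fourier_eq, ofReal_norm]
  rw [eLpNorm_congr_ae h1, ← Lp.enorm_def, h4, Lp.enorm_def]
  exact eLpNorm_congr_ae hf2.coeFn_toLp

end Plancherel

/-- One-dimensional comparison of two convolutions through the Fourier transform. -/
lemma conv_compare {k₁ k₂ b : ℝ → ℂ} {h C B : ℝ} (hk₁ : Integrable k₁) (hk₂ : Integrable k₂)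
    (hb : Integrable b) (hbc : Continuous b) (hB : ∀ y, ‖b y‖ ≤ B) (hC : 0 ≤ C)
    (hk : ∀ l : ℝ, ‖∫ r, k₁ r * Complex.exp (-(Complex.I * l * r))‖ ≤
      C * ‖∫ r, k₂ r * Complex.exp (-(Complex.I * l * r))‖) :
    eLpNorm (fun y => ∫ r, k₁ r * b (y - r * h)) 2 volume ≤
      ENNReal.ofReal C * eLpNorm (fun y => ∫ r, k₂ r * b (y - r * h)) 2 volume := by
  have key : ∀ k : ℝ → ℂ, Integrable k → 
      Integrable (Function.uncurry fun y r => k r * b (y - r * h)) := by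
    intro k hk
    have hmeas : AEStronglyMeasurable (Function.uncurry fun y r => k r * b (y - r * h))
        ((volume : Measure ℝ).prod volume) := by
      refine AEStronglyMeasurable.mul (hk.aestronglyMeasurable.comp_snd) ?_
      exact Continuous.aestronglyMeasurable (by fun_prop)
    rw [Measure.volume_eq_prod, integrable_prod_iff' hmeas]
    constructor
    · refine Eventually.of_forall fun r => ?_
      exact (hb.comp_sub_right (r * h)).const_mul (k r)
    · have : (fun r => ∫ y, ‖Function.uncurry (fun y r => k r * b (y - r * h)) (y, r)‖)
          = fun r => ‖k r‖ * ∫ y, ‖b y‖ := by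
        funext r
        simp only [Function.uncurry, norm_mul]
        rw [integral_const_mul, integral_sub_right_eq_self (fun y => ‖b y‖)]
      rw [this]
      exact hk.norm.mul_const _
  have cint : ∀ k : ℝ → ℂ, Integrable k → Integrable (fun y => ∫ r, k r * b (y - r * h)) :=
    fun k hk => (key k hk).integral_prod_left
  have cbd : ∀ k : ℝ → ℂ, Integrable k → ∀ y, ‖∫ r, k r * b (y - r * h)‖ ≤ (∫ r, ‖k r‖) * B := by
    intro k hk y
    rw [← integral_mul_const]
    refine norm_integral_le_of_norm_le (hk.norm.mul_const _) (Eventually.of_forall fun r => ?_)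
    rw [norm_mul]
    exact mul_le_mul_of_nonneg_left (hB _) (norm_nonneg _)
  have cL2 : ∀ k : ℝ → ℂ, Integrable k → MemLp (fun y => ∫ r, k r * b (y - r * h)) 2 (volume : Measure ℝ) := by
    intro k hk
    have h1 := cint k hk
    rw [memLp_two_iff_integrable_sq_norm h1.1]
    refine (h1.norm.const_mul ((∫ r, ‖k r‖) * B)).mono' (h1.1.norm.pow 2)
      (Eventually.of_forall fun y => ?_)
    rw [Real.norm_of_nonneg (by positivity), sq]
    exact mul_le_mul_of_nonneg_right (cbd k hk y) (norm_nonneg _)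
  have cF : ∀ k : ℝ → ℂ, Integrable k → ∀ η : ℝ, 𝓕 (fun y => ∫ r, k r * b (y - r * h)) η
      = (∫ r, k r * Complex.exp (-(Complex.I * (2 * π * h * η : ℝ) * r))) * 𝓕 b η := by
    intro k hk η
    simp only [Real.fourier_real_eq_integral_exp_smul, smul_eq_mul]
    have hi : Integrable (Function.uncurry fun y r : ℝ =>
        Complex.exp (↑(-2 * π * y * η) * Complex.I) * (k r * b (y - r * h))) := by
      refine (key k hk).bdd_mul (c := 1) (Continuous.aestronglyMeasurable (by fun_prop)) ?_
      refine Eventually.of_forall fun p => ?_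
      rw [Complex.norm_exp_ofReal_mul_I]
    have e1 : ∀ y : ℝ, Complex.exp (↑(-2 * π * y * η) * Complex.I) * ∫ r, k r * b (y - r * h)
        = ∫ r, Complex.exp (↑(-2 * π * y * η) * Complex.I) * (k r * b (y - r * h)) :=
      fun y => (integral_const_mul _ _).symm
    simp only [e1]
    rw [integral_integral_swap hi, ← integral_mul_const]
    refine integral_congr_ae (Eventually.of_forall fun r => ?_)
    simp only
    rw [← integral_add_right_eq_self _ (r * h), ← integral_const_mul]
    refine integral_congr_ae (Eventually.of_forall fun y => ?_)
    simp only [add_sub_cancel_right]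
    have e2 : Complex.exp (↑(-2 * π * (y + r * h) * η) * Complex.I) =
        Complex.exp (-(Complex.I * (2 * π * h * η : ℝ) * r)) *
          Complex.exp (↑(-2 * π * y * η) * Complex.I) := by
      rw [← Complex.exp_add]; congr 1; push_cast; ring
    rw [e2]; ring
  rw [← plancherel_l1_l2 (cint _ hk₁) (cL2 _ hk₁), ← plancherel_l1_l2 (cint _ hk₂) (cL2 _ hk₂)]
  rw [← Real.enorm_of_nonneg hC, ← eLpNorm_const_smul]
  refine eLpNorm_mono fun η => ?_
  rw [Pi.smul_apply, norm_smul, cF _ hk₁, cF _ hk₂, norm_mul, norm_mul, Real.norm_of_nonneg hC,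
    ← mul_assoc]
  exact mul_le_mul_of_nonneg_right (hk _) (norm_nonneg _)

section Kernels

lemma integrableOn_exp_neg_mul {a : ℝ} (ha : 0 < a) :
    IntegrableOn (fun t : ℝ => Real.exp (-a * t)) (Set.Ioi 0) :=
  exp_neg_integrableOn_Ioi 0 ha

lemma sinc_bound (t l : ℝ) : |Real.sin (t * l) / t| ≤ |l| := by
  rcases eq_or_ne t 0 with rfl | ht
  · simp
  rw [abs_div, div_le_iff₀ (abs_pos.2 ht), mul_comm, ← abs_mul]
  exact Real.abs_sin_le_abs

lemma integrableOn_exp_sinc {a : ℝ} (ha : 0 < a) (l : ℝ) :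
    IntegrableOn (fun t : ℝ => Real.exp (-a * t) * (Real.sin (t * l) / t)) (Set.Ioi 0) := by
  refine ((integrableOn_exp_neg_mul ha).mul_const |l|).mono'
    (Measurable.aestronglyMeasurable (by fun_prop)) (Eventually.of_forall fun t => ?_)
  rw [norm_mul, Real.norm_of_nonneg (Real.exp_nonneg _)]
  exact mul_le_mul_of_nonneg_left (sinc_bound t l) (Real.exp_nonneg _)

lemma integral_exp_cos {a : ℝ} (ha : 0 < a) (l : ℝ) :
    ∫ t in Set.Ioi (0:ℝ), Real.exp (-a * t) * Real.cos (t * l) = a / (a ^ 2 + l ^ 2) := by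
  have h1 := integral_exp_mul_complex_Ioi (a := -(a:ℂ) + l * Complex.I) (by simpa using ha) 0
  have h2 := integrableOn_exp_mul_complex_Ioi (a := -(a:ℂ) + l * Complex.I) (by simpa using ha) 0
  have h3 := integral_re h2
  rw [h1] at h3
  have h4 : ∀ t : ℝ, RCLike.re (Complex.exp ((-(a:ℂ) + l * Complex.I) * t)) =
      Real.exp (-a * t) * Real.cos (t * l) := by
    intro t
    simp [Complex.exp_re, mul_comm]
  simp only [h4] at h3
  rw [h3]
  have hne : a ^ 2 + l ^ 2 ≠ 0 := by positivity
  simp [Complex.inv_re, Complex.normSq_apply, neg_div]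
  field_simp

lemma integral_exp_sinc {a : ℝ} (ha : 0 < a) (l : ℝ) :
    ∫ t in Set.Ioi (0:ℝ), Real.exp (-a * t) * (Real.sin (t * l) / t) = Real.arctan (l / a) := by
  set f : ℝ → ℝ := fun l => ∫ t in Set.Ioi (0:ℝ), Real.exp (-a * t) * (Real.sin (t * l) / t) with hf
  have hd : ∀ l, HasDerivAt f (a / (a ^ 2 + l ^ 2)) l := by
    intro l
    have := hasDerivAt_integral_of_dominated_loc_of_deriv_le (μ := volume.restrict (Set.Ioi (0:ℝ)))
      (F := fun l t => Real.exp (-a * t) * (Real.sin (t * l) / t))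
      (F' := fun l t => Real.exp (-a * t) * Real.cos (t * l))
      (bound := fun t => Real.exp (-a * t)) (x₀ := l) (s := Set.univ) univ_mem
      (Eventually.of_forall fun l => (integrableOn_exp_sinc ha l).1)
      (integrableOn_exp_sinc ha l)
      (Measurable.aestronglyMeasurable (by fun_prop))
      (Eventually.of_forall fun t l _ => by
        rw [norm_mul, Real.norm_of_nonneg (Real.exp_nonneg _)]
        exact mul_le_of_le_one_right (Real.exp_nonneg _) (Real.abs_cos_le_one _))
      (integrableOn_exp_neg_mul ha)
      (by
        filter_upwards [ae_restrict_mem measurableSet_Ioi] with t ht l _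
        have ht' : t ≠ 0 := ne_of_gt ht
        have h1 : HasDerivAt (fun l => Real.sin (t * l)) (Real.cos (t * l) * (t * 1)) l :=
          ((hasDerivAt_id l).const_mul t).sin
        have h2 := (h1.div_const t).const_mul (Real.exp (-a * t))
        have e : Real.exp (-a * t) * (Real.cos (t * l) * (t * 1) / t) =
            Real.exp (-a * t) * Real.cos (t * l) := by
          field_simp
        rw [e] at h2
        exact h2)
    rw [← integral_exp_cos ha l]
    exact this.2
  have hd2 : ∀ l, HasDerivAt (fun l => Real.arctan (l / a)) (a / (a ^ 2 + l ^ 2)) l := by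
    intro l
    have h2 := ((hasDerivAt_id l).div_const a).arctan
    have e : 1 / (1 + (id l / a) ^ 2) * (1 / a) = a / (a ^ 2 + l ^ 2) := by
      simp only [id]
      field_simp
    rw [e] at h2
    exact h2
  have hc := is_const_of_deriv_eq_zero (f := fun l => f l - Real.arctan (l / a))
    (fun l => ((hd l).sub (hd2 l)).differentiableAt)
    (fun l => ((hd l).sub (hd2 l)).deriv.trans (sub_self _)) l 0
  have h0 : f 0 = 0 := by simp [hf]
  simp only [h0, zero_div, Real.arctan_zero, sub_zero] at hc
  linarith

lemma symbol_bound {c : ℝ} (hc0 : 0 ≤ c) (hc : c < 1) (l : ℝ) :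
    ‖∫ t in Set.Ioi (0:ℝ), ((Real.exp (-t) / t : ℝ) : ℂ) *
      (Complex.exp (t * (c - Complex.I * l)) - Complex.exp (-(t * (c - Complex.I * l))))‖
      ≤ 2 / (1 - c) + π := by
  set f1 : ℝ → ℝ := fun t => Real.exp (-t) / t * (Real.exp (c * t) - Real.exp (-(c * t))) *
    Real.cos (t * l) with hf1
  set f2 : ℝ → ℝ := fun t => Real.exp (-(1 - c) * t) * (Real.sin (t * l) / t) with hf2
  set f3 : ℝ → ℝ := fun t => Real.exp (-(1 + c) * t) * (Real.sin (t * l) / t) with hf3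
  have hc1 : 0 < 1 - c := by linarith
  have hc2 : 0 < 1 + c := by linarith
  have hb : ∀ t ∈ Set.Ioi (0:ℝ), ‖f1 t‖ ≤ 2 * Real.exp (-(1 - c) * t) := by
    intro t ht
    have ht : 0 < t := ht
    rw [hf1]
    simp only
    rw [norm_mul]
    have h1 : 0 ≤ Real.exp (c * t) - Real.exp (-(c * t)) := by
      have : 0 ≤ c * t := by positivity
      have := Real.exp_le_exp.2 (by linarith : -(c * t) ≤ c * t)
      linarith
    have h2 : Real.exp (c * t) - Real.exp (-(c * t)) ≤ 2 * t * Real.exp (c * t) := by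
      have h3 := Real.add_one_le_exp (-(2 * (c * t)))
      have h4 : Real.exp (-(c * t)) = Real.exp (-(2 * (c * t))) * Real.exp (c * t) := by
        rw [← Real.exp_add]; congr 1; ring
      rw [h4]
      have h5 := Real.exp_pos (c * t)
      have h6 : c * t ≤ t := by nlinarith
      nlinarith
    rw [Real.norm_of_nonneg (by positivity)]
    refine (mul_le_of_le_one_right (by positivity) (Real.abs_cos_le_one _)).trans ?_
    calc Real.exp (-t) / t * (Real.exp (c * t) - Real.exp (-(c * t)))
        ≤ Real.exp (-t) / t * (2 * t * Real.exp (c * t)) := by gcongr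
      _ = 2 * (Real.exp (-t) * Real.exp (c * t)) := by field_simp
      _ = _ := by rw [← Real.exp_add]; congr 2; ring
  have i0 := (integrableOn_exp_neg_mul hc1).const_mul 2
  have i1 : IntegrableOn f1 (Set.Ioi 0) := by
    refine i0.mono' (Measurable.aestronglyMeasurable (by fun_prop)) ?_
    filter_upwards [ae_restrict_mem measurableSet_Ioi] with t ht using hb t ht
  have i2 : IntegrableOn f2 (Set.Ioi 0) := integrableOn_exp_sinc hc1 l
  have i3 : IntegrableOn f3 (Set.Ioi 0) := integrableOn_exp_sinc hc2 l
  have e : ∀ t : ℝ, ((Real.exp (-t) / t : ℝ) : ℂ) *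
      (Complex.exp (t * (c - Complex.I * l)) - Complex.exp (-(t * (c - Complex.I * l))))
      = (f1 t : ℂ) - Complex.I * ((f2 t + f3 t : ℝ) : ℂ) := by
    intro t
    have a1 : Complex.exp (t * (c - Complex.I * l)) = Real.exp (c * t) *
        (Real.cos (t * l) - Real.sin (t * l) * Complex.I) := by
      have : (t * (c - Complex.I * l) : ℂ) = ((c * t : ℝ) : ℂ) + ((-(t * l) : ℝ) : ℂ) * Complex.I := by
        push_cast; ring
      rw [this, Complex.exp_add, Complex.exp_mul_I, ← Complex.ofReal_cos, ← Complex.ofReal_sin,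
        Real.cos_neg, Real.sin_neg]
      push_cast; ring
    have a2 : Complex.exp (-(t * (c - Complex.I * l))) = Real.exp (-(c * t)) *
        (Real.cos (t * l) + Real.sin (t * l) * Complex.I) := by
      have : (-(t * (c - Complex.I * l)) : ℂ) =
          ((-(c * t) : ℝ) : ℂ) + ((t * l : ℝ) : ℂ) * Complex.I := by
        push_cast; ring
      rw [this, Complex.exp_add, Complex.exp_mul_I, ← Complex.ofReal_cos, ← Complex.ofReal_sin]
      push_cast; ring
    have b1 : Real.exp (-(1 - c) * t) = Real.exp (-t) * Real.exp (c * t) := by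
      rw [← Real.exp_add]; congr 1; ring
    have b2 : Real.exp (-(1 + c) * t) = Real.exp (-t) * Real.exp (-(c * t)) := by
      rw [← Real.exp_add]; congr 1; ring
    rw [a1, a2, hf1, hf2, hf3]
    simp only [b1, b2]
    push_cast
    ring
  simp only [e]
  have j1 : ‖∫ t in Set.Ioi (0:ℝ), f1 t‖ ≤ 2 / (1 - c) := by
    have := norm_integral_le_of_norm_le i0 (by
      filter_upwards [ae_restrict_mem measurableSet_Ioi] with t ht using hb t ht)
    refine this.trans (le_of_eq ?_)
    rw [integral_const_mul, integral_exp_mul_Ioi (by linarith)]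
    rw [mul_zero, Real.exp_zero, neg_div_neg_eq, mul_one_div]
  have j2 : ‖∫ t in Set.Ioi (0:ℝ), (f2 t + f3 t)‖ ≤ π := by
    rw [integral_add i2 i3, hf2, hf3, integral_exp_sinc hc1, integral_exp_sinc hc2,
      Real.norm_eq_abs, abs_le]
    have := Real.arctan_lt_pi_div_two (l / (1 - c))
    have := Real.arctan_lt_pi_div_two (l / (1 + c))
    have := Real.neg_pi_div_two_lt_arctan (l / (1 - c))
    have := Real.neg_pi_div_two_lt_arctan (l / (1 + c))
    constructor <;> linarith
  rw [integral_sub i1.ofReal ((i2.add i3).ofReal.const_mul _), integral_const_mul,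
    integral_complex_ofReal, integral_complex_ofReal]
  refine (norm_sub_le _ _).trans ?_
  rw [norm_mul, Complex.norm_I, one_mul, Complex.norm_real, Complex.norm_real]
  exact add_le_add j1 j2

/-- The kernel of the resolvent. -/
def Eker (s : ℝ) : ℝ := if 0 ≤ s then Real.exp (-s) else 0

/-- The two-variable kernel of `arctan(hA) (hA+i)⁻¹`. -/
def kker (t r : ℝ) : ℝ := Real.exp (-t) / t * (Eker (r - t) - Eker (r + t))

/-- The kernel of `arctan(hA) (hA+i)⁻¹`. -/
def mker (r : ℝ) : ℝ := ∫ t in Set.Ioi (0:ℝ), kker t r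

lemma Eker_measurable : Measurable Eker :=
  Measurable.ite measurableSet_Ici (by fun_prop) measurable_const

lemma Eker_nonneg (s : ℝ) : 0 ≤ Eker s := by
  unfold Eker; split_ifs <;> positivity

lemma Eker_exp_integrable {c : ℝ} (hc : c < 1) : Integrable (fun r => Eker r * Real.exp (c * r)) := by
  have h1 : IntegrableOn (fun t : ℝ => Real.exp (-(1 - c) * t)) (Set.Ici 0) :=
    (integrableOn_Ici_iff_integrableOn_Ioi (by simp)).2 (integrableOn_exp_neg_mul (by linarith))
  refine (h1.integrable_indicator measurableSet_Ici).congr (Eventually.of_forall fun r => ?_)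
  simp only [Eker, Set.indicator, Set.mem_Ici]
  split_ifs
  · rw [← Real.exp_add]; congr 1; ring
  · simp

lemma Eker_shift_integrable {c : ℝ} (hc : c < 1) (t : ℝ) :
    Integrable (fun r => Eker (r - t) * Real.exp (c * r)) := by
  refine (((Eker_exp_integrable hc).comp_sub_right t).const_mul (Real.exp (c * t))).congr
    (Eventually.of_forall fun r => ?_)
  simp only
  have : Real.exp (c * r) = Real.exp (c * t) * Real.exp (c * (r - t)) := by
    rw [← Real.exp_add]; congr 1; ring
  rw [this]; ring

lemma Eker_shift_integral (c t : ℝ) :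
    ∫ r, Eker (r - t) * Real.exp (c * r) = Real.exp (c * t) * ∫ r, Eker r * Real.exp (c * r) := by
  rw [← integral_add_right_eq_self _ t, ← integral_const_mul]
  refine integral_congr_ae (Eventually.of_forall fun r => ?_)
  simp only [add_sub_cancel_right]
  have : Real.exp (c * (r + t)) = Real.exp (c * t) * Real.exp (c * r) := by
    rw [← Real.exp_add]; congr 1; ring
  rw [this]; ring

lemma kappa_bound {c : ℝ} (hc0 : 0 ≤ c) (hc : c < 1) {t : ℝ} (ht : 0 < t) (r : ℝ) :
    |Eker (r - t) - Eker (r + t)| * Real.exp (c * r) ≤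
      (Eker (r - t) * Real.exp (c * r) - Eker (r + t) * Real.exp (c * r)) +
        2 * (Set.Ico (-t) t).indicator (fun _ => (1:ℝ)) r := by
  have hpos := Real.exp_pos (c * r)
  by_cases h1 : 0 ≤ r - t
  · have h2 : 0 ≤ r + t := by linarith
    have h3 : r ∉ Set.Ico (-t) t := fun h => by linarith [h.2]
    rw [Set.indicator_of_notMem h3, Eker, Eker, if_pos h1, if_pos h2, abs_of_nonneg]
    · linarith
    · have := Real.exp_le_exp.2 (by linarith : -(r + t) ≤ -(r - t)); linarith
  · have e1 : Eker (r - t) = 0 := if_neg h1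
    by_cases h2 : 0 ≤ r + t
    · have h3 : r ∈ Set.Ico (-t) t := ⟨by linarith, by linarith⟩
      rw [Set.indicator_of_mem h3, e1, zero_sub, abs_neg, abs_of_nonneg (Eker_nonneg _)]
      have : Eker (r + t) * Real.exp (c * r) ≤ 1 := by
        rw [Eker, if_pos h2, ← Real.exp_add, Real.exp_le_one_iff]
        nlinarith
      linarith
    · have e2 : Eker (r + t) = 0 := if_neg h2
      rw [e1, e2]
      have : 0 ≤ (Set.Ico (-t) t).indicator (fun _ => (1:ℝ)) r :=
        Set.indicator_nonneg (fun _ _ => zero_le_one) _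
      simp
      linarith

lemma exp_sub_exp_le {c t : ℝ} (hc : c < 1) (ht : 0 < t) :
    Real.exp (c * t) - Real.exp (-(c * t)) ≤ 2 * t * Real.exp (c * t) := by
  have h3 := Real.add_one_le_exp (-(2 * (c * t)))
  have h4 : Real.exp (-(c * t)) = Real.exp (-(2 * (c * t))) * Real.exp (c * t) := by
    rw [← Real.exp_add]; congr 1; ring
  rw [h4]
  have h5 := Real.exp_pos (c * t)
  have h6 : c * t ≤ t := by nlinarith
  nlinarith

lemma kappa_integrable {c : ℝ} (hc : c < 1) (t : ℝ) :
    Integrable (fun r => (Eker (r - t) - Eker (r + t)) * Real.exp (c * r)) := by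
  have h := (Eker_shift_integrable hc t).sub (Eker_shift_integrable hc (-t))
  refine h.congr (Eventually.of_forall fun r => ?_)
  simp [sub_mul]

lemma kappa_integral_bound {c : ℝ} (hc0 : 0 ≤ c) (hc : c < 1) {t : ℝ} (ht : 0 < t) :
    ∫ r, ‖(Eker (r - t) - Eker (r + t)) * Real.exp (c * r)‖ ≤
      2 * t * Real.exp (c * t) * (∫ r, Eker r * Real.exp (c * r)) + 4 * t := by
  have i1 := Eker_shift_integrable hc t
  have i2 : Integrable (fun r => Eker (r + t) * Real.exp (c * r)) := by
    simpa using Eker_shift_integrable hc (-t)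
  have i3 : Integrable ((Set.Ico (-t) t).indicator (fun _ => (1:ℝ))) :=
    (integrableOn_const (by simp)).integrable_indicator measurableSet_Ico
  have i4 : Integrable (fun r => 2 * (Set.Ico (-t) t).indicator (fun _ => (1:ℝ)) r) :=
    i3.const_mul 2
  have h1 : ∫ r, ‖(Eker (r - t) - Eker (r + t)) * Real.exp (c * r)‖ ≤
      ∫ r, ((Eker (r - t) * Real.exp (c * r) - Eker (r + t) * Real.exp (c * r)) +
        2 * (Set.Ico (-t) t).indicator (fun _ => (1:ℝ)) r) := by
    refine integral_mono (kappa_integrable hc t).norm ((i1.sub i2).add i4) fun r => ?_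
    simp only
    rw [norm_mul, Real.norm_of_nonneg (Real.exp_nonneg _)]
    exact kappa_bound hc0 hc ht r
  refine h1.trans ?_
  have e2 : ∫ r, Eker (r + t) * Real.exp (c * r) =
      Real.exp (-(c * t)) * ∫ r, Eker r * Real.exp (c * r) := by
    simpa using Eker_shift_integral c (-t)
  have i5 : Integrable (fun r => Eker (r - t) * Real.exp (c * r) -
      Eker (r + t) * Real.exp (c * r)) := i1.sub i2
  rw [integral_add i5 i4, integral_sub i1 i2, Eker_shift_integral, e2,
    integral_const_mul, integral_indicator measurableSet_Ico, ← sub_mul]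
  have h0 : 0 ≤ ∫ r, Eker r * Real.exp (c * r) :=
    integral_nonneg fun r => mul_nonneg (Eker_nonneg _) (Real.exp_nonneg _)
  have h3 := mul_le_mul_of_nonneg_right (exp_sub_exp_le hc ht) h0
  have h4 : ∫ _ in Set.Ico (-t) t, (1:ℝ) = 2 * t := by
    simp [Measure.real, ht.le]; ring_nf
  rw [h4]
  linarith

lemma kker_exp_integrable {c : ℝ} (hc0 : 0 ≤ c) (hc : c < 1) :
    Integrable (Function.uncurry fun t r => kker t r * Real.exp (c * r))
      ((volume.restrict (Set.Ioi (0:ℝ))).prod volume) := by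
  have hm : AEStronglyMeasurable (Function.uncurry fun t r => kker t r * Real.exp (c * r))
      ((volume.restrict (Set.Ioi (0:ℝ))).prod volume) := by
    refine Measurable.aestronglyMeasurable ?_
    unfold kker Function.uncurry
    have := Eker_measurable
    fun_prop
  rw [integrable_prod_iff hm]
  constructor
  · refine Eventually.of_forall fun t => ?_
    refine ((kappa_integrable hc t).const_mul (Real.exp (-t) / t)).congr
      (Eventually.of_forall fun r => ?_)
    simp [kker, mul_assoc]
  · set J := ∫ r, Eker r * Real.exp (c * r) with hJ
    have hb : IntegrableOn (fun t => 2 * J * Real.exp (-(1 - c) * t) + 4 * Real.exp (-1 * t))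
        (Set.Ioi (0:ℝ)) :=
      ((integrableOn_exp_neg_mul (by linarith)).const_mul _).add
        ((integrableOn_exp_neg_mul one_pos).const_mul _)
    refine hb.mono' hm.norm.integral_prod_right' ?_
    filter_upwards [ae_restrict_mem measurableSet_Ioi] with t ht
    have ht : 0 < t := ht
    rw [Real.norm_of_nonneg (integral_nonneg fun r => norm_nonneg _)]
    have e : ∀ r, ‖Function.uncurry (fun t r => kker t r * Real.exp (c * r)) (t, r)‖ =
        Real.exp (-t) / t * ‖(Eker (r - t) - Eker (r + t)) * Real.exp (c * r)‖ := by
      intro r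
      simp only [Function.uncurry, kker, mul_assoc]
      rw [norm_mul, Real.norm_of_nonneg (by positivity)]
    simp only [e]
    rw [integral_const_mul]
    refine (mul_le_mul_of_nonneg_left (kappa_integral_bound hc0 hc ht) (by positivity)).trans
      (le_of_eq ?_)
    have b1 : Real.exp (-(1 - c) * t) = Real.exp (-t) * Real.exp (c * t) := by
      rw [← Real.exp_add]; congr 1; ring
    rw [b1, neg_one_mul, ← hJ]
    field_simp

lemma mker_exp_integrable {c : ℝ} (hc0 : 0 ≤ c) (hc : c < 1) :
    Integrable (fun r => mker r * Real.exp (c * r)) := by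
  refine (kker_exp_integrable hc0 hc).integral_prod_right.congr (Eventually.of_forall fun r => ?_)
  simp only [Function.uncurry, mker]
  rw [integral_mul_const]

lemma mker_integrable : Integrable mker := by
  simpa using mker_exp_integrable le_rfl one_pos

lemma Eker_integrable : Integrable Eker := by
  simpa using Eker_exp_integrable one_pos

lemma mker_transform {c : ℝ} (hc0 : 0 ≤ c) (hc : c < 1) (l : ℝ) :
    ∫ r, ((mker r * Real.exp (c * r) : ℝ) : ℂ) * Complex.exp (-(Complex.I * l * r)) =
      (∫ t in Set.Ioi (0:ℝ), ((Real.exp (-t) / t : ℝ) : ℂ) *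
      (Complex.exp (t * (c - Complex.I * l)) - Complex.exp (-(t * (c - Complex.I * l))))) *
      ∫ r, ((Eker r * Real.exp (c * r) : ℝ) : ℂ) * Complex.exp (-(Complex.I * l * r)) := by
  have hnorm : ∀ r : ℝ, ‖Complex.exp (-(Complex.I * l * r))‖ = 1 := by
    intro r
    have : (-(Complex.I * l * r) : ℂ) = ((-(l * r) : ℝ) : ℂ) * Complex.I := by push_cast; ring
    rw [this, Complex.norm_exp_ofReal_mul_I]
  have hi : Integrable (Function.uncurry fun t r : ℝ => ((kker t r * Real.exp (c * r) : ℝ) : ℂ) *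
      Complex.exp (-(Complex.I * l * r))) ((volume.restrict (Set.Ioi (0:ℝ))).prod volume) := by
    refine (kker_exp_integrable hc0 hc).ofReal.mul_bdd (c := 1)
      (Continuous.aestronglyMeasurable (by fun_prop)) (Eventually.of_forall fun p => ?_)
    rw [hnorm]
  have e1 : ∀ r : ℝ, ((mker r * Real.exp (c * r) : ℝ) : ℂ) * Complex.exp (-(Complex.I * l * r)) =
      ∫ t in Set.Ioi (0:ℝ), ((kker t r * Real.exp (c * r) : ℝ) : ℂ) *
        Complex.exp (-(Complex.I * l * r)) := by
    intro r
    rw [integral_mul_const, integral_complex_ofReal, integral_mul_const, mker]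
  have hs : ∀ t : ℝ, Integrable (fun r : ℝ => ((Eker (r - t) * Real.exp (c * r) : ℝ) : ℂ) *
      Complex.exp (-(Complex.I * l * r))) := by
    intro t
    refine (Eker_shift_integrable hc t).ofReal.mul_bdd (c := 1)
      (Continuous.aestronglyMeasurable (by fun_prop)) (Eventually.of_forall fun p => ?_)
    rw [hnorm]
  have e2 : ∀ t : ℝ, ∫ r : ℝ, ((Eker (r - t) * Real.exp (c * r) : ℝ) : ℂ) *
      Complex.exp (-(Complex.I * l * r)) = Complex.exp (t * (c - Complex.I * l)) *
      ∫ r, ((Eker r * Real.exp (c * r) : ℝ) : ℂ) * Complex.exp (-(Complex.I * l * r)) := by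
    intro t
    rw [← integral_add_right_eq_self _ t, ← integral_const_mul]
    refine integral_congr_ae (Eventually.of_forall fun r => ?_)
    simp only [add_sub_cancel_right]
    push_cast
    have : Complex.exp (c * (r + t)) * Complex.exp (-(Complex.I * l * (r + t))) =
        Complex.exp (t * (c - Complex.I * l)) *
          (Complex.exp (c * r) * Complex.exp (-(Complex.I * l * r))) := by
      simp only [← Complex.exp_add]; congr 1; ring
    rw [mul_assoc, this]; ring
  simp only [e1]
  rw [← integral_integral_swap hi, ← integral_mul_const]
  refine integral_congr_ae (Eventually.of_forall fun t => ?_)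
  simp only
  have e3 : Complex.exp (-(t * (c - Complex.I * l))) =
      Complex.exp (((-t : ℝ) : ℂ) * (c - Complex.I * l)) := by push_cast; ring_nf
  rw [e3, mul_assoc, sub_mul, ← e2, ← e2, ← integral_sub (hs t) (hs (-t)), ← integral_const_mul]
  refine integral_congr_ae (Eventually.of_forall fun r => ?_)
  simp only [kker, sub_neg_eq_add]
  push_cast
  ring

end Kernels

section Dilations
variable {d : ℕ}

lemma dil_dil (s t : ℝ) (u : Ed d → ℂ) (x : Ed d) :
    dil d s (dil d t u) x = dil d (s + t) u x := by
  simp only [dil, smul_smul, ← Real.exp_add, ← mul_assoc, ← Complex.ofReal_mul]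
  ring_nf

lemma dil_bound (u : SchwartzMap (Ed d) ℂ) {x : Ed d} (hx : x ≠ 0) :
    ∃ B, ∀ s, ‖dil d s u x‖ ≤ B := by
  obtain ⟨C0, -, h0⟩ := u.decay 0 0
  obtain ⟨C1, -, h1⟩ := u.decay d 0
  simp only [pow_zero, one_mul, norm_iteratedFDeriv_zero] at h0 h1
  have hxp : 0 < ‖x‖ := norm_pos_iff.2 hx
  refine ⟨Real.sqrt (C1 / ‖x‖ ^ d * C0), fun s => Real.le_sqrt_of_sq_le ?_⟩
  have e1 := h1 (Real.exp s • x)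
  have e0 := h0 (Real.exp s • x)
  rw [norm_smul, Real.norm_of_nonneg (Real.exp_nonneg s), mul_pow] at e1
  have e2 : Real.exp (s * d / 2) ^ 2 = Real.exp s ^ d := by
    rw [← Real.exp_nat_mul, ← Real.exp_nat_mul]; congr 1; push_cast; ring
  rw [dil, norm_mul, Complex.norm_real, Real.norm_of_nonneg (Real.exp_nonneg _), mul_pow, e2]
  have e3 : Real.exp s ^ d * ‖u (Real.exp s • x)‖ ≤ C1 / ‖x‖ ^ d := by
    rw [le_div_iff₀ (by positivity)]; linarith
  calc Real.exp s ^ d * ‖u (Real.exp s • x)‖ ^ 2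
      = (Real.exp s ^ d * ‖u (Real.exp s • x)‖) * ‖u (Real.exp s • x)‖ := by ring
    _ ≤ C1 / ‖x‖ ^ d * C0 := by
      refine mul_le_mul e3 e0 (norm_nonneg _) ?_
      exact le_trans (by positivity) e3

lemma dil_continuous {u : Ed d → ℂ} (hu : Continuous u) (s : ℝ) : Continuous (dil d s u) := by
  unfold dil; fun_prop

lemma dil_sq_integrable (u : SchwartzMap (Ed d) ℂ) (s : ℝ) :
    Integrable (fun x => ‖dil d s u x‖ ^ 2) := by
  have h1 : Integrable (fun x => ‖u x‖ ^ 2) :=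
    (memLp_two_iff_integrable_sq_norm u.continuous.aestronglyMeasurable).1
      (u.memLp 2 volume)
  have h2 := (h1.comp_smul (Real.exp_pos s).ne').const_mul (Real.exp (s * d / 2) ^ 2)
  refine h2.congr (Eventually.of_forall fun x => ?_)
  simp only [dil, norm_mul, Complex.norm_real, Real.norm_of_nonneg (Real.exp_nonneg _), mul_pow]

lemma dil_sq_integral (u : Ed d → ℂ) (s : ℝ) :
    ∫ x, ‖dil d s u x‖ ^ 2 = ∫ x, ‖u x‖ ^ 2 := by
  simp only [dil, norm_mul, Complex.norm_real, Real.norm_of_nonneg (Real.exp_nonneg _), mul_pow]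
  rw [integral_const_mul, Measure.integral_comp_smul volume (fun x => ‖u x‖ ^ 2)]
  have e2 : Real.exp (s * d / 2) ^ 2 = Real.exp s ^ d := by
    rw [← Real.exp_nat_mul, ← Real.exp_nat_mul]; congr 1; push_cast; ring
  rw [e2, finrank_euclideanSpace_fin, abs_of_pos (by positivity), smul_eq_mul, ← mul_assoc,
    mul_inv_cancel₀ (by positivity), one_mul]

lemma dil_memLp (u : SchwartzMap (Ed d) ℂ) (s : ℝ) : MemLp (dil d s u) 2 (volume : Measure (Ed d)) :=
  (memLp_two_iff_integrable_sq_norm (dil_continuous u.continuous s).aestronglyMeasurable).2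
    (dil_sq_integrable u s)

lemma fourier_dil (u : Ed d → ℂ) (s : ℝ) (ξ : Ed d) :
    𝓕 (dil d s u) ξ = dil d (-s) (𝓕 u) ξ := by
  simp only [Real.fourier_eq, dil]
  have h := Measure.integral_comp_smul (volume : Measure (Ed d))
    (fun y => Real.fourierChar (-(inner ℝ y (Real.exp (-s) • ξ))) • u y) (Real.exp s)
  rw [finrank_euclideanSpace_fin, abs_of_pos (by positivity)] at h
  have e : ∀ x : Ed d, inner ℝ (Real.exp s • x) (Real.exp (-s) • ξ) = inner ℝ x ξ := by
    intro x
    rw [inner_smul_left, inner_smul_right, ← mul_assoc]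
    simp [← Real.exp_add]
  simp only [e] at h
  have e3 : ∀ x : Ed d, Real.fourierChar (-(inner ℝ x ξ)) •
      ((Real.exp (s * d / 2) : ℂ) * u (Real.exp s • x)) = (Real.exp (s * d / 2) : ℂ) *
      (Real.fourierChar (-(inner ℝ x ξ)) • u (Real.exp s • x)) := by
    intro x
    rw [mul_smul_comm]
  simp only [e3]
  rw [integral_const_mul, h, Complex.real_smul, ← mul_assoc, ← Complex.ofReal_mul]
  congr 2
  rw [← Real.exp_nat_mul, ← Real.exp_neg, ← Real.exp_add]
  congr 1; ring

lemma dil_pair_integrable {k : ℝ → ℂ} (hk : Integrable k) (u : SchwartzMap (Ed d) ℂ) (σ : ℝ)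
    {φ : Ed d → ℂ} (hφ : MemLp φ 2 (volume : Measure (Ed d))) :
    Integrable (Function.uncurry fun (x : Ed d) (r : ℝ) => k r * dil d (r * σ) u x * φ x)
      (volume.prod volume) := by
  have hu := u.continuous
  have hm : AEStronglyMeasurable
      (Function.uncurry fun (x : Ed d) (r : ℝ) => k r * dil d (r * σ) u x * φ x)
      (volume.prod volume) := by
    refine (AEStronglyMeasurable.mul (hk.aestronglyMeasurable.comp_snd) ?_).mul
      (hφ.1.comp_fst)
    refine Continuous.aestronglyMeasurable ?_
    unfold dil; fun_prop
  have hφ2 := (memLp_two_iff_integrable_sq_norm hφ.1).1 hφ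
  rw [integrable_prod_iff' hm]
  constructor
  · refine Eventually.of_forall fun r => ?_
    have := ((dil_memLp u (r * σ)).integrable_mul hφ).const_mul (k r)
    refine this.congr (Eventually.of_forall fun x => ?_)
    simp [mul_assoc]
  · refine (hk.norm.mul_const ((∫ x, ‖u x‖ ^ 2) + ∫ x, ‖φ x‖ ^ 2)).mono'
      hm.norm.prod_swap.integral_prod_right' (Eventually.of_forall fun r => ?_)
    rw [Real.norm_of_nonneg (integral_nonneg fun r => norm_nonneg _)]
    have i1 := dil_sq_integrable u (r * σ)
    rw [← dil_sq_integral u (r * σ), ← integral_add i1 hφ2, ← integral_const_mul]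
    refine integral_mono_of_nonneg (Eventually.of_forall fun x => norm_nonneg _)
      ((i1.add hφ2).const_mul _) (Eventually.of_forall fun x => ?_)
    simp only [Function.uncurry, norm_mul, mul_assoc, Pi.add_apply]
    refine mul_le_mul_of_nonneg_left ?_ (norm_nonneg _)
    nlinarith [sq_nonneg (‖dil d (r * σ) u x‖ - ‖φ x‖), sq_nonneg ‖dil d (r * σ) u x‖,
      sq_nonneg ‖φ x‖]

lemma dil_avg_locallyIntegrable {k : ℝ → ℂ} (hk : Integrable k) (u : SchwartzMap (Ed d) ℂ) (σ : ℝ) :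
    LocallyIntegrable (fun x => ∫ r, k r * dil d (r * σ) u x) := by
  rw [locallyIntegrable_iff]
  intro K hK
  have hφ : MemLp (K.indicator fun _ => (1:ℂ)) 2 (volume : Measure (Ed d)) :=
    memLp_indicator_const 2 hK.measurableSet 1 (Or.inr hK.measure_lt_top.ne)
  have h := (dil_pair_integrable hk u σ hφ).integral_prod_left
  rw [← integrable_indicator_iff hK.measurableSet]
  refine h.congr (Eventually.of_forall fun x => ?_)
  simp only [Function.uncurry]
  rw [integral_mul_const]
  by_cases hx : x ∈ K <;> simp [hx]

lemma fourier_avg {k : ℝ → ℂ} (hk : Integrable k) (u U : SchwartzMap (Ed d) ℂ)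
    (hU : ∀ ξ, U ξ = 𝓕 (⇑u) ξ) (h : ℝ)
    (hf : Integrable (fun x => ∫ r, k r * dil d (r * h) u x)) :
    𝓕 (fun x => ∫ r, k r * dil d (r * h) u x) =ᵐ[volume]
      fun ξ => ∫ r, k r * dil d (r * (-h)) U ξ := by
  refine ae_eq_of_schwartz (fourier_continuous hf).locallyIntegrable ?_ ?_
  · exact dil_avg_locallyIntegrable hk U (-h)
  intro φ
  rw [fourier_flip hf (φ.integrable (μ := volume))]
  have i1 := dil_pair_integrable hk u h ((𝓕 φ : SchwartzMap (Ed d) ℂ).memLp 2 volume)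
  have i2 := dil_pair_integrable hk U (-h) (φ.memLp 2 volume)
  have e1 : ∀ x, (∫ r, k r * dil d (r * h) u x) * 𝓕 (⇑φ) x
      = ∫ r, k r * dil d (r * h) u x * (𝓕 φ : SchwartzMap (Ed d) ℂ) x := by
    intro x; rw [integral_mul_const, SchwartzMap.fourier_coe]
  have e2 : ∀ x, (∫ r, k r * dil d (r * (-h)) U x) * φ x
      = ∫ r, k r * dil d (r * (-h)) U x * φ x := by
    intro x; rw [integral_mul_const]
  simp only [e1, e2]
  rw [integral_integral_swap i1, integral_integral_swap i2]
  refine integral_congr_ae (Eventually.of_forall fun r => ?_)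
  simp only [mul_assoc]
  rw [integral_const_mul, integral_const_mul]
  congr 1
  have hdint : Integrable (dil d (r * h) u) := by
    have := ((u.integrable (μ := volume)).comp_smul (Real.exp_pos (r * h)).ne').const_mul
      (Real.exp (r * h * d / 2) : ℂ)
    exact this
  have := fourier_flip hdint (φ.integrable (μ := volume))
  rw [SchwartzMap.fourier_coe, ← this]
  refine integral_congr_ae (Eventually.of_forall fun x => ?_)
  have hU' : ⇑U = 𝓕 (⇑u) := funext hU
  simp only [fourier_dil, mul_neg, hU']

end Dilations

section Formulas
variable {d : ℕ}

lemma resDil_formula (h : ℝ) (u : Ed d → ℂ) (x : Ed d) :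
    resDil d h (-I) u x = ∫ r, (-I * (Eker r : ℂ)) * dil d (r * h) u x := by
  have h1 : (-I).im < 0 := by simp
  rw [resDil, if_pos h1, ← integral_indicator measurableSet_Ici, ← integral_const_mul]
  refine integral_congr_ae (Eventually.of_forall fun r => ?_)
  by_cases hr : 0 ≤ r
  · have : -(I * r * -I) = -(r:ℂ) := by
      have := I_mul_I
      linear_combination (r:ℂ) * this
    simp only [Eker, hr, Set.indicator, Set.mem_Ici, if_true, this, inv_I]
    push_cast
    ring
  · simp [Eker, hr, Set.indicator]

lemma dil_resDil (h t : ℝ) (u : Ed d → ℂ) (x : Ed d) :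
    dil d (t * h) (resDil d h (-I) u) x
      = ∫ r, (-I * (Eker (r - t) : ℂ)) * dil d (r * h) u x := by
  have e : ∀ r, (-I * (Eker (r - t) : ℂ)) * dil d (r * h) u x
      = (fun r => (-I * (Eker r : ℂ)) * dil d ((r + t) * h) u x) (r - t) := by
    intro r; simp
  simp only [e]
  rw [integral_sub_right_eq_self (fun r => (-I * (Eker r : ℂ)) * dil d ((r + t) * h) u x) t]
  rw [dil, resDil_formula, ← integral_const_mul]
  refine integral_congr_ae (Eventually.of_forall fun r => ?_)
  simp only [dil]
  rw [smul_smul, ← Real.exp_add]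
  have e1 : Real.exp ((r + t) * h * d / 2)
      = Real.exp (t * h * d / 2) * Real.exp (r * h * d / 2) := by
    rw [← Real.exp_add]; congr 1; ring
  have e2 : r * h + t * h = (r + t) * h := by ring
  rw [e1, e2, Complex.ofReal_mul]
  ring

lemma arctanA_formula {h : ℝ} (u : SchwartzMap (Ed d) ℂ) {x : Ed d} (hx : x ≠ 0) :
    arctanA d h (resDil d h (-I) u) x = ∫ r, (-(1/2) * (mker r : ℂ)) * dil d (r * h) u x := by
  obtain ⟨B, hB⟩ := dil_bound u hx
  have hu := u.continuous
  have hdc : Continuous fun r : ℝ => dil d (r * h) u x := by unfold dil; fun_prop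
  have hbd : ∀ k : ℝ → ℂ, Integrable k → Integrable fun r => k r * dil d (r * h) u x := by
    intro k hk
    exact hk.mul_bdd hdc.aestronglyMeasurable (Eventually.of_forall fun r => hB (r * h))
  have h0 := kker_exp_integrable (c := 0) le_rfl one_pos
  simp only [zero_mul, Real.exp_zero, mul_one] at h0
  have h1 : Integrable (Function.uncurry fun (t r : ℝ) => (-(1/2) * (kker t r : ℂ)) * dil d (r * h) u x)
      ((volume.restrict (Set.Ioi 0)).prod volume) := by
    refine (h0.ofReal.const_mul (-(1/2) : ℂ)).mul_bdd (c := B) ?_ ?_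
    · exact (hdc.comp continuous_snd).aestronglyMeasurable
    · exact Eventually.of_forall fun p => hB _
  have e : ∀ t, ((Real.exp (-t) / t : ℝ) : ℂ) * sinA d (t * h) (resDil d h (-I) u) x
      = ∫ r, (-(1/2) * (kker t r : ℂ)) * dil d (r * h) u x := by
    intro t
    have hEi := Eker_integrable.ofReal (𝕜 := ℂ)
    rw [sinA, ← neg_mul, dil_resDil, dil_resDil, ← integral_sub]
    · rw [div_eq_mul_inv (∫ a, _), ← integral_mul_const, ← integral_const_mul]
      refine integral_congr_ae (Eventually.of_forall fun r => ?_)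
      simp only [kker, sub_neg_eq_add]
      push_cast
      have : (2 * I)⁻¹ = -I / 2 := by
        rw [mul_inv, inv_I]; ring
      rw [this]
      linear_combination (Complex.exp (-(t:ℂ)) / t : ℂ) / 2 * ((Eker (r - t) : ℂ) - Eker (r + t)) * dil d (r * h) u x * I_mul_I
    · exact hbd _ ((hEi.comp_sub_right t).const_mul _)
    · exact hbd _ ((hEi.comp_sub_right (-t)).const_mul _)
  rw [arctanA]
  simp only [e]
  rw [integral_integral_swap h1]
  refine integral_congr_ae (Eventually.of_forall fun r => ?_)
  simp only
  rw [integral_mul_const, integral_const_mul, mker]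
  congr 2
  exact integral_ofReal

lemma resDil_integrable {h : ℝ} (hh : 0 ≤ h) (u : SchwartzMap (Ed d) ℂ) :
    Integrable (resDil d h (-I) u) := by
  have hfe : resDil d h (-I) u = fun x => ∫ r, (-I * (Eker r : ℂ)) * dil d (r * h) u x :=
    funext fun x => resDil_formula h u x
  rw [hfe]
  have hu := u.continuous
  have hEi := (Eker_integrable.ofReal (𝕜 := ℂ)).const_mul (-I)
  have hm : AEStronglyMeasurable
      (Function.uncurry fun (x : Ed d) (r : ℝ) => (-I * (Eker r : ℂ)) * dil d (r * h) u x)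
      (volume.prod volume) := by
    refine AEStronglyMeasurable.mul (hEi.aestronglyMeasurable.comp_snd) ?_
    refine Continuous.aestronglyMeasurable ?_
    unfold dil; fun_prop
  have hui : Integrable (⇑u) := u.integrable (μ := volume)
  have hi : Integrable (Function.uncurry fun (x : Ed d) (r : ℝ) =>
      (-I * (Eker r : ℂ)) * dil d (r * h) u x) (volume.prod volume) := by
    rw [integrable_prod_iff' hm]
    have hdi : ∀ s : ℝ, Integrable (dil d s u) := fun s =>
      (hui.comp_smul (Real.exp_pos s).ne').const_mul (Real.exp (s * d / 2) : ℂ)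
    constructor
    · exact Eventually.of_forall fun r => (hdi (r * h)).const_mul (-I * (Eker r : ℂ))
    · refine (Eker_integrable.mul_const (∫ x, ‖u x‖)).mono'
        hm.norm.prod_swap.integral_prod_right' (Eventually.of_forall fun r => ?_)
      rw [Real.norm_of_nonneg (integral_nonneg fun r => norm_nonneg _)]
      simp only [Function.uncurry, norm_mul, dil, norm_neg, norm_I, one_mul]
      rw [integral_const_mul, integral_const_mul,
        Measure.integral_comp_smul volume (fun x => ‖u x‖)]
      by_cases hr : 0 ≤ r
      · have hE : ‖(Eker r : ℂ)‖ = Eker r := by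
          rw [Complex.norm_real, Real.norm_of_nonneg (Eker_nonneg r)]
        rw [hE]
        refine mul_le_mul_of_nonneg_left ?_ (Eker_nonneg r)
        have hI : 0 ≤ ∫ x, ‖u x‖ := integral_nonneg fun x => norm_nonneg _
        rw [smul_eq_mul, ← mul_assoc]
        refine mul_le_of_le_one_left hI ?_
        rw [Complex.norm_real, Real.norm_of_nonneg (Real.exp_pos _).le, finrank_euclideanSpace_fin,
          abs_of_nonneg (by positivity), ← Real.exp_nat_mul, ← Real.exp_neg, ← Real.exp_add,
          Real.exp_le_one_iff]
        have : 0 ≤ r * h * d := by positivity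
        nlinarith
      · simp [Eker, hr]
  exact hi.integral_prod_left

lemma mker_measurable : Measurable mker := by
  have hm : Measurable (Function.uncurry fun (r t : ℝ) => kker t r) := by
    have := Eker_measurable
    unfold kker Function.uncurry
    fun_prop
  exact (hm.stronglyMeasurable.integral_prod_right (ν := volume.restrict (Set.Ioi 0))).measurable

end Formulas

section Polar
variable {d : ℕ}

lemma polar_lintegral (hd : d ≠ 0) {F : Ed d → ℝ≥0∞} (hF : Measurable F) :
    ∫⁻ x, F x = ∫⁻ ω, (∫⁻ y : ℝ, ENNReal.ofReal (Real.exp y ^ d) * F (Real.exp y • ω.1))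
      ∂((volume : Measure (Ed d)).toSphere) := by
  have : NeZero d := ⟨hd⟩
  have hmp := (volume : Measure (Ed d)).measurePreserving_homeomorphUnitSphereProd
  have hG : Measurable fun p : Metric.sphere (0 : Ed d) 1 × Set.Ioi (0:ℝ) => F (p.2.1 • p.1.1) := by
    fun_prop
  have h1 : ∫⁻ x, F x = ∫⁻ p, F (p.2.1 • p.1.1)
      ∂((volume : Measure (Ed d)).toSphere.prod (Measure.volumeIoiPow (Module.finrank ℝ (Ed d) - 1))) := by
    rw [← hmp.lintegral_comp_emb (Homeomorph.measurableEmbedding _)]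
    have e : ∀ x : ({0}ᶜ : Set (Ed d)), F ((homeomorphUnitSphereProd (Ed d) x).2.1 •
        (homeomorphUnitSphereProd (Ed d) x).1.1) = F x.1 := by
      intro x
      have := congrArg Subtype.val ((homeomorphUnitSphereProd (Ed d)).symm_apply_apply x)
      rw [homeomorphUnitSphereProd_symm_apply_coe] at this
      rw [this]
    simp only [e]
    rw [lintegral_subtype_comap (measurableSet_singleton _).compl F, restrict_compl_singleton]
  rw [h1, lintegral_prod _ hG.aemeasurable]
  refine lintegral_congr fun ω => ?_
  rw [Measure.volumeIoiPow, lintegral_withDensity_eq_lintegral_mul _ (by fun_prop) (by fun_prop)]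
  simp only [Pi.mul_apply]
  rw [lintegral_subtype_comap measurableSet_Ioi
    (fun r : ℝ => ENNReal.ofReal (r ^ (Module.finrank ℝ (Ed d) - 1)) * F (r • ω.1))]
  rw [← Real.range_exp, ← Set.image_univ,
    lintegral_image_eq_lintegral_abs_deriv_mul MeasurableSet.univ
      (fun x _ => (Real.hasDerivAt_exp x).hasDerivWithinAt) Real.exp_injective.injOn,
    Measure.restrict_univ]
  refine lintegral_congr fun y => ?_
  rw [← mul_assoc, ← ENNReal.ofReal_mul (abs_nonneg _), abs_of_pos (Real.exp_pos y),
    finrank_euclideanSpace_fin, ← pow_succ', Nat.sub_add_cancel (Nat.one_le_iff_ne_zero.2 hd)]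

lemma eLpNorm_two_sq {α : Type*} [MeasurableSpace α] (μ : Measure α) (f : α → ℂ) :
    eLpNorm f 2 μ ^ 2 = ∫⁻ x, ‖f x‖ₑ ^ 2 ∂μ := by
  have := eLpNorm_nnreal_pow_eq_lintegral (μ := μ) (f := f) (p := 2) two_ne_zero
  norm_num at this
  exact_mod_cast this

lemma exp_abs_integrable : Integrable fun y : ℝ => Real.exp (-|y|) := by
  refine (Eker_integrable.add Eker_integrable.comp_neg).mono' (by fun_prop)
    (Eventually.of_forall fun y => ?_)
  rw [Real.norm_of_nonneg (Real.exp_pos _).le]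
  have h1 := Eker_nonneg y
  have h2 := Eker_nonneg (-y)
  simp only [Pi.add_apply]
  rcases le_total 0 y with hy | hy
  · have : Eker y = Real.exp (-|y|) := by rw [Eker, if_pos hy, abs_of_nonneg hy]
    linarith
  · have : Eker (-y) = Real.exp (-|y|) := by
      rw [Eker, if_pos (by linarith), abs_of_nonpos hy]
    linarith

/-- The restriction of a Schwartz function to a ray, in logarithmic coordinates. -/
def ray (U : Ed d → ℂ) (ω : Ed d) (y : ℝ) : ℂ :=
  (Real.exp (y * (1 + d / 2)) : ℂ) * U (Real.exp y • ω)

lemma ray_bound (U : SchwartzMap (Ed d) ℂ) {ω : Ed d} (hω : ‖ω‖ = 1) :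
    ∃ B, ∀ y, ‖ray U ω y‖ ≤ B * Real.exp (-|y|) := by
  obtain ⟨C0, hC0, h0⟩ := U.decay 0 0
  obtain ⟨C1, hC1, h1⟩ := U.decay (d + 2) 0
  simp only [pow_zero, one_mul, norm_iteratedFDeriv_zero] at h0 h1
  refine ⟨C0 + C1, fun y => ?_⟩
  have hd0 : (0:ℝ) ≤ d := Nat.cast_nonneg d
  rw [ray, norm_mul, Complex.norm_real, Real.norm_of_nonneg (Real.exp_pos _).le, add_mul]
  rcases le_total 0 y with hy | hy
  · have h := h1 (Real.exp y • ω)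
    rw [norm_smul, hω, mul_one, Real.norm_of_nonneg (Real.exp_pos _).le, ← Real.exp_nat_mul] at h
    rw [abs_of_nonneg hy]
    have e : Real.exp (y * (1 + d / 2)) ≤ Real.exp (-y) * Real.exp (((d + 2 : ℕ) : ℝ) * y) := by
      rw [← Real.exp_add]
      refine Real.exp_le_exp.2 ?_
      push_cast
      nlinarith [mul_nonneg hd0 hy]
    calc _ ≤ (Real.exp (-y) * Real.exp (((d + 2 : ℕ) : ℝ) * y)) * ‖U (Real.exp y • ω)‖ := by gcongr
      _ = Real.exp (-y) * (Real.exp (((d + 2 : ℕ) : ℝ) * y) * ‖U (Real.exp y • ω)‖) := by ring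
      _ ≤ Real.exp (-y) * C1 := by gcongr
      _ ≤ _ := by nlinarith [mul_pos hC0 (Real.exp_pos (-y))]
  · have h := h0 (Real.exp y • ω)
    rw [abs_of_nonpos hy, neg_neg]
    have e : Real.exp (y * (1 + d / 2)) ≤ Real.exp y := by
      refine Real.exp_le_exp.2 ?_
      nlinarith [mul_nonneg hd0 (neg_nonneg.2 hy)]
    calc _ ≤ Real.exp y * C0 := by gcongr
      _ ≤ _ := by nlinarith [mul_pos hC1 (Real.exp_pos y)]

lemma ray_avg (k : ℝ → ℂ) (h : ℝ) (U : Ed d → ℂ) {ω : Ed d} (hω : ‖ω‖ = 1) (y : ℝ) :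
    ENNReal.ofReal (Real.exp y ^ d) *
      ‖(‖Real.exp y • ω‖ : ℂ) * ∫ r, k r * dil d (r * (-h)) U (Real.exp y • ω)‖ₑ ^ 2
      = ‖∫ r, (k r * (Real.exp (h * r) : ℂ)) * ray U ω (y - r * h)‖ₑ ^ 2 := by
  have e1 : Real.exp y ^ d = Real.exp (y * d / 2) ^ 2 := by
    rw [← Real.exp_nat_mul, ← Real.exp_nat_mul]; congr 1; push_cast; ring
  have e2 : ∫ r, (k r * (Real.exp (h * r) : ℂ)) * ray U ω (y - r * h)
      = ((Real.exp (y * d / 2) * Real.exp y : ℝ) : ℂ) *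
        ∫ r, k r * dil d (r * (-h)) U (Real.exp y • ω) := by
    rw [← integral_const_mul]
    refine integral_congr_ae (Eventually.of_forall fun r => ?_)
    simp only [ray, dil, smul_smul, ← Real.exp_add]
    have e3 : Real.exp (h * r) * Real.exp ((y - r * h) * (1 + d / 2))
        = Real.exp (y * d / 2 + y) * Real.exp (r * -h * d / 2) := by
      rw [← Real.exp_add, ← Real.exp_add]; congr 1; ring
    have e4 : r * -h + y = y - r * h := by ring
    have e5 : (Real.exp (h * r) : ℂ) * (Real.exp ((y - r * h) * (1 + d / 2)) : ℂ)
        = (Real.exp (y * d / 2 + y) : ℂ) * (Real.exp (r * -h * d / 2) : ℂ) := by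
      exact_mod_cast e3
    rw [e4]
    linear_combination k r * U (Real.exp (y - r * h) • ω) * e5
  rw [e2, e1, norm_smul, hω, mul_one, Real.norm_of_nonneg (Real.exp_pos y).le,
    ENNReal.ofReal_pow (Real.exp_pos _).le, ← mul_pow, Complex.ofReal_mul, mul_assoc]
  congr 1
  rw [enorm_mul (Real.exp (y * d / 2) : ℂ)]
  congr 1
  rw [← ofReal_norm, Complex.norm_real, Real.norm_of_nonneg (Real.exp_pos _).le]

lemma weighted_compare (hd : d ≠ 0) {k₁ k₂ : ℝ → ℂ} {h C : ℝ} (hm₁ : Measurable k₁)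
    (hm₂ : Measurable k₂) (hi₁ : Integrable fun r => k₁ r * (Real.exp (h * r) : ℂ))
    (hi₂ : Integrable fun r => k₂ r * (Real.exp (h * r) : ℂ)) (hC : 0 ≤ C)
    (hk : ∀ l : ℝ, ‖∫ r, (k₁ r * (Real.exp (h * r) : ℂ)) * Complex.exp (-(I * l * r))‖ ≤
      C * ‖∫ r, (k₂ r * (Real.exp (h * r) : ℂ)) * Complex.exp (-(I * l * r))‖)
    (U : SchwartzMap (Ed d) ℂ) :
    eLpNorm (fun ξ : Ed d => (‖ξ‖ : ℂ) * ∫ r, k₁ r * dil d (r * (-h)) U ξ) 2 volume ≤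
      ENNReal.ofReal C *
        eLpNorm (fun ξ : Ed d => (‖ξ‖ : ℂ) * ∫ r, k₂ r * dil d (r * (-h)) U ξ) 2 volume := by
  have hU := U.continuous
  have hmeas : ∀ k : ℝ → ℂ, Measurable k → Measurable fun ξ : Ed d =>
      ‖(‖ξ‖ : ℂ) * ∫ r, k r * dil d (r * (-h)) U ξ‖ₑ ^ 2 := by
    intro k hk
    have h1 : Measurable fun ξ : Ed d => ∫ r, k r * dil d (r * (-h)) U ξ := by
      have : StronglyMeasurable (Function.uncurry fun (ξ : Ed d) (r : ℝ) =>
          k r * dil d (r * (-h)) U ξ) := by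
        refine Measurable.stronglyMeasurable ?_
        refine Measurable.mul (hk.comp measurable_snd) (Continuous.measurable ?_)
        unfold dil; fun_prop
      exact this.integral_prod_right.measurable
    fun_prop
  rw [← ENNReal.pow_le_pow_left_iff two_ne_zero, mul_pow, eLpNorm_two_sq,
    eLpNorm_two_sq, polar_lintegral hd (hmeas k₁ hm₁), polar_lintegral hd (hmeas k₂ hm₂),
    ← lintegral_const_mul']
  · refine lintegral_mono fun ω => ?_
    have hω : ‖ω.1‖ = 1 := by simp
    simp only [ray_avg _ h (⇑U) hω]
    rw [← eLpNorm_two_sq volume (fun y => ∫ r, (k₁ r * (Real.exp (h * r) : ℂ)) * ray U ω.1 (y - r * h)),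
      ← eLpNorm_two_sq volume (fun y => ∫ r, (k₂ r * (Real.exp (h * r) : ℂ)) * ray U ω.1 (y - r * h)),
      ← mul_pow]
    obtain ⟨B, hB⟩ := ray_bound U hω
    have hc : Continuous (ray U ω.1) := by unfold ray; fun_prop
    have hbi : Integrable (ray U ω.1) := (exp_abs_integrable.const_mul B).mono'
      hc.aestronglyMeasurable (Eventually.of_forall hB)
    have hB0 : 0 ≤ B := by
      have := (norm_nonneg _).trans (hB 0)
      simpa using this
    gcongr
    refine conv_compare hi₁ hi₂ hbi hc (B := B) (fun y => (hB y).trans ?_) hC hk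
    exact mul_le_of_le_one_right hB0 (by simp)
  · finiteness

end Polar

section Final
variable {d : ℕ}

lemma fourier_of_not_integrable {f : Ed d → ℂ} (hf : ¬ Integrable f) (ξ : Ed d) : 𝓕 f ξ = 0 := by
  rw [Real.fourier_eq]
  refine integral_undef fun hi => hf ?_
  exact (Real.fourierIntegral_convergent_iff ξ).1 hi

lemma main_bound (hd : d ≠ 0) {h : ℝ} (hh : 0 < h) (hh1 : h < 1) (u : SchwartzMap (Ed d) ℂ) :
    eLpNorm (fun ξ : Ed d => (‖ξ‖ : ℂ) * 𝓕 (arctanA d h (resDil d h (-I) ⇑u)) ξ) 2 volume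
      ≤ ENNReal.ofReal (1 / 2 * (2 / (1 - h) + π)) *
        eLpNorm (fun ξ : Ed d => (‖ξ‖ : ℂ) * 𝓕 (resDil d h (-I) ⇑u) ξ) 2 volume := by
  by_cases hw : Integrable (arctanA d h (resDil d h (-I) ⇑u))
  swap
  · simp [fourier_of_not_integrable hw]
  have : NeZero d := ⟨hd⟩
  set k₁ : ℝ → ℂ := fun r => -(1/2) * (mker r : ℂ) with hk₁
  set k₂ : ℝ → ℂ := fun r => -I * (Eker r : ℂ) with hk₂
  have hi₁ : Integrable k₁ := (mker_integrable.ofReal (𝕜 := ℂ)).const_mul _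
  have hi₂ : Integrable k₂ := (Eker_integrable.ofReal (𝕜 := ℂ)).const_mul _
  have hwe : arctanA d h (resDil d h (-I) ⇑u) =ᵐ[volume] fun x => ∫ r, k₁ r * dil d (r * h) u x := by
    filter_upwards [Measure.ae_ne volume (0 : Ed d)] with x hx
    exact arctanA_formula u hx
  have hve : resDil d h (-I) ⇑u = fun x => ∫ r, k₂ r * dil d (r * h) u x :=
    funext fun x => resDil_formula h u x
  have hv := resDil_integrable hh.le u
  have hw' := hw.congr hwe
  have hv' := hv
  rw [hve] at hv'
  have hU : ∀ ξ, (𝓕 u : SchwartzMap (Ed d) ℂ) ξ = 𝓕 (⇑u) ξ := fun ξ => by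
    rw [SchwartzMap.fourier_coe]
  have f1 := fourier_avg hi₁ u (𝓕 u) hU h hw'
  have f2 := fourier_avg hi₂ u (𝓕 u) hU h hv'
  have hwF : 𝓕 (arctanA d h (resDil d h (-I) ⇑u)) = 𝓕 fun x => ∫ r, k₁ r * dil d (r * h) u x :=
    funext (Real.fourier_congr_ae hwe)
  rw [hwF, hve]
  have c1 : (fun ξ : Ed d => (‖ξ‖ : ℂ) * 𝓕 (fun x => ∫ r, k₁ r * dil d (r * h) u x) ξ)
      =ᵐ[volume] fun ξ => (‖ξ‖ : ℂ) *
        ∫ r, k₁ r * dil d (r * (-h)) (𝓕 u : SchwartzMap (Ed d) ℂ) ξ := by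
    filter_upwards [f1] with ξ hξ
    rw [hξ]
  have c2 : (fun ξ : Ed d => (‖ξ‖ : ℂ) * 𝓕 (fun x => ∫ r, k₂ r * dil d (r * h) u x) ξ)
      =ᵐ[volume] fun ξ => (‖ξ‖ : ℂ) *
        ∫ r, k₂ r * dil d (r * (-h)) (𝓕 u : SchwartzMap (Ed d) ℂ) ξ := by
    filter_upwards [f2] with ξ hξ
    rw [hξ]
  rw [eLpNorm_congr_ae c1, eLpNorm_congr_ae c2]
  have h1h : 0 < 1 - h := by linarith
  have hC : 0 ≤ 1 / 2 * (2 / (1 - h) + π) := by positivity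
  have e1 : ∀ r, k₁ r * (Real.exp (h * r) : ℂ)
      = -(1/2) * ((mker r * Real.exp (h * r) : ℝ) : ℂ) := by
    intro r; simp only [hk₁]; push_cast; ring
  have e2 : ∀ r, k₂ r * (Real.exp (h * r) : ℂ)
      = -I * ((Eker r * Real.exp (h * r) : ℝ) : ℂ) := by
    intro r; simp only [hk₂]; push_cast; ring
  refine weighted_compare hd ?_ ?_ ?_ ?_ hC ?_ (𝓕 u)
  · have := mker_measurable
    fun_prop
  · have := Eker_measurable
    fun_prop
  · simp only [e1]
    exact ((mker_exp_integrable hh.le hh1).ofReal (𝕜 := ℂ)).const_mul _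
  · simp only [e2]
    exact ((Eker_exp_integrable hh1).ofReal (𝕜 := ℂ)).const_mul _
  · intro l
    simp only [e1, e2]
    simp only [mul_assoc (-(1/2) : ℂ), mul_assoc (-I)]
    rw [integral_const_mul, integral_const_mul, mker_transform hh.le hh1 l, norm_mul, norm_mul,
      norm_mul]
    have hs := symbol_bound hh.le hh1 l
    have n1 : ‖(-(1/2) : ℂ)‖ = 1 / 2 := by norm_num
    have n2 : ‖-I‖ = 1 := by simp
    rw [n1, n2, one_mul, mul_assoc]
    gcongr

end Final

/-- **Proposition (boundedness of `|D| F(hA) (hA+i)⁻¹` against `|D| (hA+i)⁻¹`).**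
For every `0 < h₀ < 1` there is `C > 0` with
`‖ |D| F(hA) (hA+i)⁻¹ u ‖_{L²} ≤ C ‖ |D| (hA+i)⁻¹ u ‖_{L²}` for all Schwartz `u` and
all `0 < h ≤ h₀`, where `F = arctan`.  The `L²` norms of the `|D|`-images are
computed on the Fourier side (Plancherel). -/
theorem statement13 (d : ℕ) (h₀ : ℝ) (hh₀ : 0 < h₀) (hh₀' : h₀ < 1) :
    ∃ C : ℝ, 0 < C ∧
      ∀ (u : SchwartzMap (Ed d) ℂ) (h : ℝ), 0 < h → h ≤ h₀ →
        eLpNorm (fun ξ : Ed d =>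
            (‖ξ‖ : ℂ) * 𝓕 (arctanA d h (resDil d h (-Complex.I) ⇑u)) ξ) 2 volume
          ≤ ENNReal.ofReal C *
            eLpNorm (fun ξ : Ed d =>
              (‖ξ‖ : ℂ) * 𝓕 (resDil d h (-Complex.I) ⇑u) ξ) 2 volume := by
  refine ⟨1 / 2 * (2 / (1 - h₀) + π), ?_, ?_⟩
  · have : 0 < 1 - h₀ := by linarith
    positivity
  · intro u h hh hle
    by_cases hd : d = 0
    · subst hd
      have h0 : ∀ ξ : Ed 0, ‖ξ‖ = 0 := fun ξ => by rw [Subsingleton.elim ξ 0, norm_zero]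
      simp [h0]
    · refine (main_bound hd hh (by linarith) u).trans ?_
      have h1 : 0 < 1 - h₀ := by linarith
      gcongr
end
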